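/- arXiv:2507.21316 — 2 statements merged into one kernel-verified Lean document; each statement's English description precedes it below -/
import Mathlib

section
/- Let 𝕆 be a discrete valuation ring with residue field 𝔽 and let A be an 𝕆-order. Then A is semiperfect if and only if every principal indecomposable A_𝔽-module (i.e., every indecomposable projective direct summand of the regular module A_𝔽) admits a lifting to an A-module that is projective over 𝕆. -/
/-- The Jacobson radical of a (possibly noncommutative) ring, as a two-sided ideal:
the intersection of all maximal left ideals. -/
def ringJacobson (R : Type*) [Ring R] : TwoSidedIdeal R :=
  TwoSidedIdeal.jacobson ⊥

/-- A ring `R` is *semiperfect* if `R / J(R)` is a semisimple (artinian) ring and every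
idempotent of `R / J(R)` can be lifted to an idempotent of `R`. -/
def IsSemiperfectRing (R : Type*) [Ring R] : Prop :=
  IsSemisimpleRing (ringJacobson R).ringCon.Quotient ∧
  ∀ x : (ringJacobson R).ringCon.Quotient, IsIdempotentElem x →
    ∃ e : R, IsIdempotentElem e ∧ (ringJacobson R).ringCon.mk' e = x

open TensorProduct

universe u v w

variable (𝕆 : Type u) [CommRing 𝕆] [IsDomain 𝕆] [IsDiscreteValuationRing 𝕆]
variable (A : Type v) [Ring A] [Algebra 𝕆 A] [Module.Finite 𝕆 A] [Module.Projective 𝕆 A]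

/-- The reduction `A_𝔽 = 𝔽 ⊗_𝕆 A` of the `𝕆`-order `A` modulo the maximal ideal of `𝕆`. -/
abbrev resAlgebra : Type _ := (IsLocalRing.ResidueField 𝕆) ⊗[𝕆] A

/-- The natural ring homomorphism `ψ : A → A_𝔽 = 𝔽 ⊗_𝕆 A`. -/
noncomputable def resMap : A →+* resAlgebra 𝕆 A :=
  (Algebra.TensorProduct.includeRight :
      A →ₐ[𝕆] (IsLocalRing.ResidueField 𝕆) ⊗[𝕆] A).toRingHom

/-- A *lifting* of an `A_𝔽`-module `P`: an `A`-module `M`, projective over `𝕆`,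
together with an identification of `𝔽 ⊗_𝕆 M` (realised as `M / 𝔪M` via a `ψ`-semilinear
surjection with kernel `𝔪M`) with `P` as `A_𝔽`-modules. -/
structure Lifting (P : Type w) [AddCommGroup P] [Module (resAlgebra 𝕆 A) P] where
  M : Type w
  [addCommGroupM : AddCommGroup M]
  [module𝕆M : Module 𝕆 M]
  [moduleAM : Module A M]
  [towerM : IsScalarTower 𝕆 A M]
  projective𝕆 : Module.Projective 𝕆 M
  f : M →ₛₗ[resMap 𝕆 A] P
  surjective : Function.Surjective f
  ker_eq : ∀ m : M, f m = 0 ↔ m ∈ (IsLocalRing.maximalIdeal 𝕆 • ⊤ : Submodule 𝕆 M)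

/-!
The kernel of `ψ : A → A_𝔽` lies in the Jacobson radical of `A`, and the Jacobson radical of `A_𝔽`
is nilpotent, so `A` is semiperfect if and only if idempotents lift along `ψ`. An idempotent `e` of
`A` makes `Ae` a lifting of the left ideal generated by `ψ e`. Conversely, direct sums of liftings
are liftings, so every direct summand of `A_𝔽` lifts once the indecomposable ones do. If `M` and `N`
are liftings of the complementary left ideals `A_𝔽 ε` and `A_𝔽 (1 - ε)`, then `M × N` is a lifting
of `A_𝔽`, so by Nakayama it is free on any preimage `(m, n)` of `1`, and the element `e` with
`e • (m, n) = (m, 0)` is an idempotent lifting `ε`.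
-/

section Projective

variable {R : Type*} [CommRing R] {𝔞 : Ideal R}

/- The coordinates of the basis vectors under a section of `(P →₀ R) → P` lie in `𝔞`, so the ideal
generated by the coordinates of any `x : P` is a finitely generated ideal `𝔠` with `𝔠 = 𝔞𝔠`. -/
theorem subsingleton_of_projective_of_smul_top_eq_top (h𝔞 : 𝔞 ≤ Ring.jacobson R)
    {P : Type*} [AddCommGroup P] [Module R P] [Module.Projective R P]
    (hP : 𝔞 • (⊤ : Submodule R P) = ⊤) : Subsingleton P := by
  obtain ⟨s, hs⟩ := Module.projective_def'.1 (inferInstance : Module.Projective R P)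
  have coord_mem : ∀ p i, s p i ∈ 𝔞 := fun p i ↦ by
    have hp : p ∈ 𝔞 • (⊤ : Submodule R P) := by rw [hP]; exact Submodule.mem_top
    simpa using Submodule.smul_top_le_comap_smul_top 𝔞 (Finsupp.lapply i ∘ₗ s) hp
  refine subsingleton_of_forall_eq 0 fun x ↦ ?_
  let 𝔠 : Ideal R := Ideal.span (Set.range (s x))
  have coord_mem_𝔠 : ∀ i, s x i ∈ 𝔠 := fun i ↦ Ideal.subset_span ⟨i, rfl⟩
  have expand : ∀ j, s x j = (s x).sum fun i r ↦ s i j * r := fun j ↦ by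
    conv_lhs => rw [← LinearMap.id_apply (R := R) x, ← hs]
    simp [Finsupp.linearCombination_apply, Finsupp.sum, map_sum, Finsupp.finsetSum_apply, mul_comm]
  have 𝔠_le : 𝔠 ≤ 𝔞 • 𝔠 := by
    refine Ideal.span_le.2 (Set.range_subset_iff.2 fun j ↦ ?_)
    rw [expand]
    exact Submodule.sum_mem _ fun i _ ↦ Submodule.smul_mem_smul (coord_mem i j) (coord_mem_𝔠 i)
  have 𝔠_eq_bot : 𝔠 = ⊥ :=
    Submodule.eq_bot_of_le_smul_of_le_jacobson_bot 𝔞 𝔠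
      (Submodule.fg_span (Finsupp.finite_range (s x))) 𝔠_le (by rwa [Ideal.jacobson_bot])
  have coords_eq_zero : s x = 0 := Finsupp.ext fun i ↦ by
    simpa [𝔠_eq_bot] using coord_mem_𝔠 i
  simpa [coords_eq_zero] using (LinearMap.congr_fun hs x).symm

theorem surjective_of_leftInverse_of_surjective_mkQ_comp (h𝔞 : 𝔞 ≤ Ring.jacobson R)
    {X M : Type*} [AddCommGroup X] [Module R X] [AddCommGroup M] [Module R M]
    [Module.Projective R M] {g : X →ₗ[R] M} {h : M →ₗ[R] X} (hgh : h ∘ₗ g = LinearMap.id)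
    (hg : Function.Surjective ((𝔞 • (⊤ : Submodule R M)).mkQ ∘ₗ g)) :
    Function.Surjective g := by
  have hhg : ∀ x, h (g x) = x := LinearMap.congr_fun hgh
  let π : M →ₗ[R] LinearMap.ker h :=
    (LinearMap.id - g ∘ₗ h).codRestrict (LinearMap.ker h) fun m ↦ by simp [hhg]
  have π_apply : ∀ k : LinearMap.ker h, π k = k := fun k ↦ Subtype.ext (by simp [π])
  have π_comp_g : ∀ x, π (g x) = 0 := fun x ↦ Subtype.ext (by simp [π, hhg])
  have : Module.Projective R (LinearMap.ker h) :=
    Module.Projective.of_split (LinearMap.ker h).subtype π (LinearMap.ext π_apply)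
  have smul_ker_eq_top : 𝔞 • (⊤ : Submodule R (LinearMap.ker h)) = ⊤ := by
    refine eq_top_iff.2 fun k _ ↦ ?_
    obtain ⟨x, hx⟩ := hg ((𝔞 • (⊤ : Submodule R M)).mkQ k)
    have hk : (k : M) - g x ∈ 𝔞 • (⊤ : Submodule R M) := (Submodule.Quotient.eq _).1 hx.symm
    simpa [π_apply, π_comp_g] using Submodule.smul_top_le_comap_smul_top 𝔞 π hk
  have := subsingleton_of_projective_of_smul_top_eq_top h𝔞 smul_ker_eq_top
  refine fun m ↦ ⟨h m, ?_⟩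
  have hm : π m = 0 := Subsingleton.elim _ _
  exact (sub_eq_zero.1 (congrArg Subtype.val hm)).symm

theorem surjective_of_forall_sub_mem_smul_top (h𝔞 : 𝔞 ≤ Ring.jacobson R)
    {M : Type*} [AddCommGroup M] [Module R M] [Module.Finite R M] (f : M →ₗ[R] M)
    (hf : ∀ x, f x - x ∈ 𝔞 • (⊤ : Submodule R M)) : Function.Surjective f := by
  rw [← Ideal.jacobson_bot] at h𝔞
  have mkQ_comp : (𝔞 • (⊤ : Submodule R M)).mkQ ∘ₗ f = (𝔞 • (⊤ : Submodule R M)).mkQ :=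
    LinearMap.ext fun x ↦ (Submodule.Quotient.eq _).2 (hf x)
  refine LinearMap.surjective_of_surjective_comp_mkQ f 𝔞 h𝔞 ?_
  rw [mkQ_comp]
  exact Submodule.mkQ_surjective _

theorem bijective_of_bijective_mapQ_smul_top (h𝔞 : 𝔞 ≤ Ring.jacobson R)
    {X M : Type*} [AddCommGroup X] [Module R X] [Module.Finite R X]
    [AddCommGroup M] [Module R M] [Module.Projective R M] (g : X →ₗ[R] M)
    (hg : Function.Bijective
      (Submodule.mapQ (𝔞 • ⊤) (𝔞 • ⊤) g (Submodule.smul_top_le_comap_smul_top 𝔞 g))) :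
    Function.Bijective g := by
  let gbar := LinearEquiv.ofBijective _ hg
  have gbar_mkQ : ∀ x, gbar (Submodule.mkQ _ x) = Submodule.mkQ _ (g x) := fun _ ↦ rfl
  obtain ⟨h, hh⟩ := Module.projective_lifting_property
    (gbar.toLinearMap ∘ₗ (𝔞 • (⊤ : Submodule R X)).mkQ) (𝔞 • (⊤ : Submodule R M)).mkQ
    (gbar.surjective.comp (Submodule.mkQ_surjective _))
  have hg_surj : Function.Surjective (h ∘ₗ g) :=
    surjective_of_forall_sub_mem_smul_top h𝔞 _ fun x ↦ (Submodule.Quotient.eq _).1 <|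
      gbar.injective ((LinearMap.congr_fun hh (g x)).trans (gbar_mkQ x).symm)
  have hg_inj : Function.Injective (h ∘ₗ g) :=
    OrzechProperty.injective_of_surjective_endomorphism _ hg_surj
  let u := LinearEquiv.ofBijective (h ∘ₗ g) ⟨hg_inj, hg_surj⟩
  refine ⟨.of_comp hg_inj, surjective_of_leftInverse_of_surjective_mkQ_comp h𝔞
    (h := u.symm.toLinearMap ∘ₗ h) (LinearMap.ext fun x ↦ u.symm_apply_apply x) ?_⟩
  exact hg.surjective.comp (Submodule.mkQ_surjective _)

theorem mem_jacobson_of_mem_smul_top (h𝔞 : 𝔞 ≤ Ring.jacobson R) {S : Type*} [Ring S] [Algebra R S]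
    [Module.Finite R S] {a : S} (ha : a ∈ 𝔞 • (⊤ : Submodule R S)) : a ∈ Ring.jacobson S := by
  rw [← Ideal.jacobson_bot, Ideal.mem_jacobson_iff]
  intro y
  obtain ⟨z, hz⟩ := surjective_of_forall_sub_mem_smul_top h𝔞 (LinearMap.mulRight R (y * a + 1))
    (fun x ↦ by simpa [mul_add, mul_assoc] using
      Submodule.smul_top_le_comap_smul_top 𝔞 (LinearMap.mulLeft R (x * y)) ha) 1
  refine ⟨z, (Submodule.mem_bot S).2 (sub_eq_zero.2 ?_)⟩
  rw [← hz, LinearMap.mulRight_apply, mul_add, mul_one, mul_assoc]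

end Projective

section LiftsIdempotents

variable {S T Q : Type*} [Ring S] [Ring T] [Ring Q]

theorem isUnit_of_sub_one_mem_jacobson {a : S} (ha : a - 1 ∈ Ring.jacobson S) : IsUnit a := by
  have exists_left_inv : ∀ b : S, b - 1 ∈ Ring.jacobson S → ∃ z, z * b = 1 := fun b hb ↦ by
    rw [← Ideal.jacobson_bot] at hb
    obtain ⟨z, hz⟩ := Ideal.exists_mul_sub_mem_of_sub_one_mem_jacobson b hb
    exact ⟨z, sub_eq_zero.1 hz⟩
  obtain ⟨z, hza⟩ := exists_left_inv a ha
  have hz : z - 1 = -(z * (a - 1)) := by rw [mul_sub, hza, mul_one, neg_sub]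
  obtain ⟨w, hwz⟩ := exists_left_inv z (hz ▸ neg_mem (Ideal.mul_mem_left _ z ha))
  have hwa : w = a := left_inv_eq_right_inv hwz hza
  exact ⟨⟨a, z, hwa ▸ hwz, hza⟩, rfl⟩

/-- Every idempotent of the target of `ψ` is the image of an idempotent of the source. -/
def LiftsIdempotents (ψ : S →+* T) : Prop :=
  ∀ x : T, IsIdempotentElem x → ∃ e : S, IsIdempotentElem e ∧ ψ e = x

theorem LiftsIdempotents.comp {ψ : S →+* T} {ρ : T →+* Q} (hρ : LiftsIdempotents ρ)
    (hψ : LiftsIdempotents ψ) : LiftsIdempotents (ρ.comp ψ) := fun x hx ↦ by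
  obtain ⟨y, hy, rfl⟩ := hρ x hx
  obtain ⟨e, he, rfl⟩ := hψ y hy
  exact ⟨e, he, rfl⟩

/- If `a` lifts the idempotent `ψ a` and `e` is an idempotent with `φ e = φ a`, then
`u = ae + (1 - a)(1 - e)` is a unit, and it conjugates `ψ e` to `ψ a`. -/
theorem LiftsIdempotents.of_ker_le {φ : S →+* Q} (hφ : LiftsIdempotents φ)
    (hφJ : RingHom.ker φ ≤ Ring.jacobson S) {ψ : S →+* T} (hψ : Function.Surjective ψ)
    (hψφ : RingHom.ker ψ ≤ RingHom.ker φ) : LiftsIdempotents ψ := fun x hx ↦ by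
  obtain ⟨a, rfl⟩ := hψ x
  have ψa : ψ a * ψ a = ψ a := hx
  have φa : IsIdempotentElem (φ a) := by
    have : a * a - a ∈ RingHom.ker φ := hψφ (by simp [RingHom.mem_ker, ψa])
    simpa [RingHom.mem_ker, sub_eq_zero, IsIdempotentElem] using this
  obtain ⟨e, he, φe⟩ := hφ (φ a) φa
  have hu : IsUnit (a * e + (1 - a) * (1 - e)) := by
    refine isUnit_of_sub_one_mem_jacobson (hφJ ?_)
    simp [RingHom.mem_ker, φe, φa.eq, φa.one_sub.eq]
  obtain ⟨u, hu⟩ := hu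
  have ψu : ψ u * ψ e = ψ a * ψ u := by
    have ψe : ψ e * ψ e = ψ e := by rw [← map_mul, he.eq]
    simp only [hu, map_add, map_mul, map_sub, map_one, mul_add, add_mul, mul_sub, sub_mul, one_mul,
      mul_one, mul_assoc, ψe]
    simp only [← mul_assoc, ψa]
    abel
  refine ⟨u * e * ↑u⁻¹, ?_, ?_⟩
  · simp [IsIdempotentElem, mul_assoc, he.mul_self_mul]
  · rw [map_mul, map_mul, ψu, mul_assoc, ← map_mul, Units.mul_inv, map_one, mul_one]

theorem mem_ringJacobson {a : S} : a ∈ ringJacobson S ↔ a ∈ Ring.jacobson S := by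
  rw [ringJacobson, TwoSidedIdeal.mem_jacobson_iff, ← Ideal.jacobson_bot, Ideal.mem_jacobson_iff]
  rfl

theorem ker_mk'_ringJacobson : RingHom.ker (ringJacobson S).ringCon.mk' = Ring.jacobson S := by
  ext a
  rw [RingHom.mem_ker, ← TwoSidedIdeal.mem_ker, TwoSidedIdeal.ker_ringCon_mk', mem_ringJacobson]

theorem isSemiperfectRing_iff_liftsIdempotents [IsSemiprimaryRing T] {ψ : S →+* T}
    (hψ : Function.Surjective ψ) (hψJ : RingHom.ker ψ ≤ Ring.jacobson S) :
    IsSemiperfectRing S ↔ LiftsIdempotents ψ := by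
  let mk := (ringJacobson S).ringCon.mk'
  have ker_mk : RingHom.ker mk = Ring.jacobson S := ker_mk'_ringJacobson
  refine ⟨fun hS ↦ LiftsIdempotents.of_ker_le hS.2 ker_mk.le hψ (hψJ.trans ker_mk.ge), fun h ↦ ?_⟩
  let ρ : T →+* (ringJacobson S).ringCon.Quotient :=
    RingHom.liftOfSurjective ψ hψ ⟨mk, hψJ.trans ker_mk.ge⟩
  have ρ_comp : ρ.comp ψ = mk := RingHom.liftOfRightInverse_comp ..
  have ρ_apply : ∀ a, ρ (ψ a) = mk a := RingHom.congr_fun ρ_comp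
  have ρ_surj : Function.Surjective ρ := fun x ↦ by
    obtain ⟨a, rfl⟩ := RingCon.mk'_surjective _ x
    exact ⟨ψ a, ρ_apply a⟩
  have : RingHomSurjective ψ := ⟨hψ⟩
  have ker_ρ_le : RingHom.ker ρ ≤ Ring.jacobson T := fun y hy ↦ by
    obtain ⟨a, rfl⟩ := hψ y
    have ha : a ∈ RingHom.ker mk := by rwa [RingHom.mem_ker, ← ρ_apply]
    exact Ring.le_comap_jacobson ψ (ker_mk ▸ ha)
  have le_ker_ρ : Ring.jacobson T ≤ RingHom.ker ρ := by
    rw [← Ring.map_jacobson_of_ker_le hψJ]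
    rintro _ ⟨a, ha, rfl⟩
    exact (ρ_apply a).trans (ker_mk.ge ha)
  have ker_ρ_nil : ∀ y ∈ RingHom.ker ρ, IsNilpotent y := fun y hy ↦ by
    obtain ⟨n, hn⟩ := IsSemiprimaryRing.isNilpotent (R := T)
    exact ⟨n, by simpa [hn] using Ideal.pow_mem_pow (ker_ρ_le hy) n⟩
  have ρ_lifts : LiftsIdempotents ρ := fun x hx ↦
    exists_isIdempotentElem_eq_of_ker_isNilpotent ρ ker_ρ_nil x (ρ_surj x) hx
  have mk_lifts : LiftsIdempotents mk := ρ_comp ▸ ρ_lifts.comp h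
  exact ⟨(Ideal.Quotient.lift (Ring.jacobson T) ρ le_ker_ρ).isSemisimpleRing_of_surjective
    (Ideal.Quotient.lift_surjective_of_surjective _ _ ρ_surj), mk_lifts⟩

end LiftsIdempotents

section Lattice

theorem isComplemented_induction {L : Type*} [Lattice L] [BoundedOrder L] [IsModularLattice L]
    [WellFoundedLT L] {p : L → Prop} (bot : p ⊥)
    (sup : ∀ b c, Disjoint b c → p b → p c → p (b ⊔ c))
    (indecomposable : ∀ a, IsComplemented a → a ≠ ⊥ →
      (∀ b c : Set.Iic a, IsCompl b c → b = ⊥ ∨ c = ⊥) → p a)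
    {a : L} (ha : IsComplemented a) : p a := by
  induction a using WellFoundedLT.induction with
  | ind a ih =>
  by_cases ha_bot : a = ⊥
  · exact ha_bot ▸ bot
  by_cases ha_indec : ∀ b c : Set.Iic a, IsCompl b c → b = ⊥ ∨ c = ⊥
  · exact indecomposable a ha ha_bot ha_indec
  push Not at ha_indec
  obtain ⟨b, c, hbc, hb, hc⟩ := ha_indec
  obtain ⟨d, hd⟩ := ha
  have left_summand : ∀ b c : Set.Iic a, IsCompl b c → c ≠ ⊥ → p b := fun b c hbc hc ↦ by
    obtain ⟨disj, sup_eq⟩ := Set.Iic.isCompl_iff.1 hbc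
    refine ih b (b.2.lt_of_ne fun hba ↦ hc (hbc.disjoint.eq_bot_of_ge (c.2.trans_eq hba.symm)))
      ⟨c ⊔ d, disj.disjoint_sup_right_of_disjoint_sup_left ?_, ?_⟩
    · rw [sup_eq]
      exact hd.disjoint
    · rw [codisjoint_iff, ← sup_assoc, sup_eq, hd.sup_eq_top]
  obtain ⟨disj, sup_eq⟩ := Set.Iic.isCompl_iff.1 hbc
  rw [← sup_eq]
  exact sup b c disj (left_summand b c hbc hc) (left_summand c b hbc.symm hb)

end Lattice

section Ideal

variable {T : Type*} [Ring T]

theorem exists_isIdempotentElem_range_toSpanSingleton_eq {I : Ideal T} (hI : IsComplemented I) :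
    ∃ ε : T, IsIdempotentElem ε ∧ LinearMap.range (LinearMap.toSpanSingleton T T ε) = I := by
  obtain ⟨J, hIJ⟩ := hI
  obtain ⟨f, hf, rfl⟩ := Submodule.isIdempotentElemEquiv I |>.symm (I.isComplEquivProj ⟨J, hIJ⟩)
  refine ⟨f 1, LinearMap.isIdempotentElem_map_one_iff.2 hf, ?_⟩
  rw [show LinearMap.toSpanSingleton T T (f 1) = f from LinearMap.ext_ring (one_smul T (f 1))]

end Ideal

section Reduction

universe x y s

variable {R : Type*} {S : Type s} {T : Type*} [CommRing R] [Ring S] [Ring T]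
  {𝔞 : Ideal R} {ψ : S →+* T}
variable {M N P Q : Type*}
  [AddCommGroup M] [Module R M] [Module S M] [AddCommGroup N] [Module R N] [Module S N]
  [AddCommGroup P] [Module T P] [AddCommGroup Q] [Module T Q]

/-- A `ψ`-semilinear map `f : M → P` is a reduction modulo `𝔞` if it is surjective with kernel
`𝔞M`, that is, if it identifies `P` with `M / 𝔞M`. -/
structure IsReduction (𝔞 : Ideal R) (f : M →ₛₗ[ψ] P) : Prop where
  surjective : Function.Surjective f
  map_eq_zero_iff : ∀ m, f m = 0 ↔ m ∈ 𝔞 • (⊤ : Submodule R M)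

/-- The direct sum of two semilinear maps over the same ring homomorphism. -/
def semilinearProdMap (f : M →ₛₗ[ψ] P) (g : N →ₛₗ[ψ] Q) : M × N →ₛₗ[ψ] P × Q where
  toFun := Prod.map f g
  map_add' _ _ := Prod.ext (map_add f _ _) (map_add g _ _)
  map_smul' _ _ := Prod.ext (map_smulₛₗ f _ _) (map_smulₛₗ g _ _)

namespace IsReduction

theorem equiv_comp {f : M →ₛₗ[ψ] P} (hf : IsReduction 𝔞 f) (e : P ≃ₗ[T] Q) :
    IsReduction 𝔞 (e.toLinearMap.comp f) where
  surjective := e.surjective.comp hf.surjective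
  map_eq_zero_iff m := e.map_eq_zero_iff.trans (hf.map_eq_zero_iff m)

theorem prodMap {f : M →ₛₗ[ψ] P} {g : N →ₛₗ[ψ] Q} (hf : IsReduction 𝔞 f) (hg : IsReduction 𝔞 g) :
    IsReduction 𝔞 (semilinearProdMap f g) where
  surjective := hf.surjective.prodMap hg.surjective
  map_eq_zero_iff := fun (m, n) ↦ by
    rw [semilinearProdMap, LinearMap.coe_mk, AddHom.coe_mk, Prod.map_apply, Prod.mk_eq_zero,
      hf.map_eq_zero_iff, hg.map_eq_zero_iff]
    refine ⟨fun ⟨hm, hn⟩ ↦ ?_, fun h ↦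
      ⟨Submodule.smul_top_le_comap_smul_top 𝔞 (LinearMap.fst R M N) h,
        Submodule.smul_top_le_comap_smul_top 𝔞 (LinearMap.snd R M N) h⟩⟩
    have hm' : (m, 0) ∈ 𝔞 • (⊤ : Submodule R (M × N)) :=
      Submodule.smul_top_le_comap_smul_top 𝔞 (LinearMap.inl R M N) hm
    have hn' : (0, n) ∈ 𝔞 • (⊤ : Submodule R (M × N)) :=
      Submodule.smul_top_le_comap_smul_top 𝔞 (LinearMap.inr R M N) hn
    simpa using add_mem hm' hn'

theorem comp_ulift {f : M →ₛₗ[ψ] P} (hf : IsReduction 𝔞 f) :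
    IsReduction 𝔞 (f.comp (ULift.moduleEquiv.{_, _, x} (R := S) (M := M)).toLinearMap) where
  surjective := hf.surjective.comp ULift.moduleEquiv.surjective
  map_eq_zero_iff m := by
    refine (hf.map_eq_zero_iff m.down).trans ⟨fun h ↦ ?_, fun h ↦ ?_⟩
    · exact Submodule.smul_top_le_comap_smul_top 𝔞 ULift.moduleEquiv.symm.toLinearMap h
    · exact Submodule.smul_top_le_comap_smul_top 𝔞 ULift.moduleEquiv.toLinearMap h

end IsReduction

variable [Algebra R S]

/-- The `T`-module `P` lifts along `ψ : S → T`: it is the reduction modulo `𝔞` of an `S`-module `M`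
that is projective over `R`. The first universe parameter is the universe of `M`. -/
def HasLifting (𝔞 : Ideal R) (ψ : S →+* T) (P : Type*) [AddCommGroup P] [Module T P] : Prop :=
  ∃ (M : Type x) (_ : AddCommGroup M) (_ : Module R M) (_ : Module S M) (_ : IsScalarTower R S M)
    (f : M →ₛₗ[ψ] P), Module.Projective R M ∧ IsReduction 𝔞 f

namespace IsReduction

theorem ker_le_jacobson [Module.Finite R S] (h𝔞 : 𝔞 ≤ Ring.jacobson R)
    (hψ : IsReduction 𝔞 ψ.toSemilinearMap) : RingHom.ker ψ ≤ Ring.jacobson S := fun a ha ↦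
  mem_jacobson_of_mem_smul_top h𝔞 ((hψ.map_eq_zero_iff a).1 ha)

theorem bijective_smul [IsScalarTower R S M] [Module.Finite R S] [Module.Projective R M]
    (h𝔞 : 𝔞 ≤ Ring.jacobson R) (hψ : IsReduction 𝔞 ψ.toSemilinearMap)
    {f : M →ₛₗ[ψ] T} (hf : IsReduction 𝔞 f) {m : M} (hm : f m = 1) :
    Function.Bijective fun s : S ↦ s • m := by
  have f_smul : ∀ s : S, f (s • m) = ψ s := fun s ↦ by rw [map_smulₛₗ, hm, smul_eq_mul, mul_one]
  refine bijective_of_bijective_mapQ_smul_top h𝔞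
    ((LinearMap.toSpanSingleton S M m).restrictScalars R) ⟨?_, ?_⟩
  · refine (injective_iff_map_eq_zero _).2 fun q ↦ ?_
    induction q using Submodule.Quotient.induction_on with
    | _ s =>
    intro hs
    have hsm : s • m ∈ 𝔞 • (⊤ : Submodule R M) := (Submodule.Quotient.mk_eq_zero _).1 hs
    rw [← hf.map_eq_zero_iff, f_smul] at hsm
    exact (Submodule.Quotient.mk_eq_zero _).2 ((hψ.map_eq_zero_iff s).1 hsm)
  · intro q
    induction q using Submodule.Quotient.induction_on with
    | _ n =>
    obtain ⟨s, hs⟩ := hψ.surjective (f n)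
    refine ⟨Submodule.Quotient.mk s, (Submodule.Quotient.eq _).2 ((hf.map_eq_zero_iff _).1 ?_)⟩
    exact (map_sub f _ _).trans (sub_eq_zero.2 ((f_smul s).trans hs))

theorem hasLifting_range {M : Type x} [AddCommGroup M] [Module R M] [Module S M]
    [IsScalarTower R S M] [Module.Projective R M] {f : M →ₛₗ[ψ] P} (hf : IsReduction 𝔞 f)
    {p : M →ₗ[S] M} (hp : IsIdempotentElem p) {q : P →ₗ[T] P} (hpq : ∀ m, f (p m) = q (f m)) :
    HasLifting.{x} 𝔞 ψ (LinearMap.range q) := by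
  have p_apply : ∀ m ∈ LinearMap.range p, p m = m := by
    rintro _ ⟨m, rfl⟩
    exact LinearMap.congr_fun hp m
  have range_le : ∀ m ∈ LinearMap.range p, f m ∈ LinearMap.range q := by
    rintro _ ⟨m, rfl⟩
    exact ⟨f m, (hpq m).symm⟩
  let ι : LinearMap.range p →ₗ[R] M := (LinearMap.range p).subtype.restrictScalars R
  let π : M →ₗ[R] LinearMap.range p := p.rangeRestrict.restrictScalars R
  have π_apply : ∀ m, π (ι m) = m := fun m ↦ Subtype.ext (p_apply m m.2)
  refine ⟨LinearMap.range p, inferInstance, inferInstance, inferInstance, inferInstance,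
    f.restrict range_le, .of_split ι π (LinearMap.ext π_apply), ?_, fun m ↦ ?_⟩
  · rintro ⟨_, y, rfl⟩
    obtain ⟨m, rfl⟩ := hf.surjective y
    exact ⟨⟨p m, m, rfl⟩, Subtype.ext (hpq m)⟩
  · rw [Subtype.ext_iff]
    refine (hf.map_eq_zero_iff m).trans ⟨fun hm ↦ ?_, fun hm ↦ ?_⟩
    · exact π_apply m ▸ Submodule.smul_top_le_comap_smul_top 𝔞 π hm
    · exact Submodule.smul_top_le_comap_smul_top 𝔞 ι hm

end IsReduction

namespace HasLifting

theorem of_subsingleton [Subsingleton P] : HasLifting.{x} 𝔞 ψ P :=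
  ⟨PUnit, inferInstance, inferInstance, inferInstance, inferInstance, 0, inferInstance,
    Function.surjective_to_subsingleton _, fun m ↦
      ⟨fun _ ↦ Subsingleton.elim 0 m ▸ zero_mem _, fun _ ↦ rfl⟩⟩

theorem congr (e : P ≃ₗ[T] Q) : HasLifting.{x} 𝔞 ψ P → HasLifting.{x} 𝔞 ψ Q :=
  fun ⟨M, _, _, _, _, _, hM, hf⟩ ↦ ⟨M, _, _, _, inferInstance, _, hM, hf.equiv_comp e⟩

theorem prod : HasLifting.{x} 𝔞 ψ P → HasLifting.{x} 𝔞 ψ Q → HasLifting.{x} 𝔞 ψ (P × Q) :=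
  fun ⟨M, _, _, _, _, _, _, hf⟩ ⟨N, _, _, _, _, _, _, hg⟩ ↦
    ⟨M × N, _, inferInstance, _, inferInstance, _, inferInstance, hf.prodMap hg⟩

theorem ulift : HasLifting.{y} 𝔞 ψ P → HasLifting.{max y x} 𝔞 ψ P :=
  fun ⟨M, _, _, _, _, _, _, hf⟩ ↦ ⟨ULift.{x} M, inferInstance, inferInstance, inferInstance,
    inferInstance, _, .of_equiv ULift.moduleEquiv.symm, hf.comp_ulift⟩

theorem sup {I J : Submodule T P} (hIJ : Disjoint I J) (hI : HasLifting.{x} 𝔞 ψ I)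
    (hJ : HasLifting.{x} 𝔞 ψ J) : HasLifting.{x} 𝔞 ψ ↥(I ⊔ J) := by
  have inj : Function.Injective (I.subtype.coprod J.subtype) := by
    rw [← LinearMap.ker_eq_bot, LinearMap.ker_coprod_of_disjoint_range _ _ (by simpa),
      Submodule.ker_subtype, Submodule.ker_subtype, Submodule.prod_bot]
  refine (hI.prod hJ).congr ((LinearEquiv.ofInjective _ inj).trans (LinearEquiv.ofEq _ _ ?_))
  rw [LinearMap.range_coprod, Submodule.range_subtype, Submodule.range_subtype]

end HasLifting

theorem exists_isIdempotentElem_map_eq_of_hasLifting [Module.Finite R S]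
    (h𝔞 : 𝔞 ≤ Ring.jacobson R) (hψ : IsReduction 𝔞 ψ.toSemilinearMap) {I J : Ideal T}
    (hIJ : IsCompl I J) (hI : HasLifting.{x} 𝔞 ψ I) (hJ : HasLifting.{y} 𝔞 ψ J) {ε : T}
    (hε : ε ∈ I) (hε' : 1 - ε ∈ J) : ∃ e : S, IsIdempotentElem e ∧ ψ e = ε := by
  obtain ⟨M, _, _, _, _, f, _, hf⟩ := hI
  obtain ⟨N, _, _, _, _, g, _, hg⟩ := hJ
  let F := (Submodule.prodEquivOfIsCompl I J hIJ).toLinearMap.comp (semilinearProdMap f g)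
  have hF : IsReduction 𝔞 F := (hf.prodMap hg).equiv_comp _
  have F_apply : ∀ m n, F (m, n) = f m + g n := fun m n ↦ rfl
  obtain ⟨m, hm⟩ := hf.surjective ⟨ε, hε⟩
  obtain ⟨n, hn⟩ := hg.surjective ⟨1 - ε, hε'⟩
  have F_mn : F (m, n) = 1 := by simp [F_apply, hm, hn]
  obtain ⟨inj, surj⟩ := hψ.bijective_smul h𝔞 hF F_mn
  obtain ⟨e, he : e • (m, n) = (m, 0)⟩ := surj (m, 0)
  have he_m : e • m = m := congrArg Prod.fst he
  refine ⟨e, inj ?_, ?_⟩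
  · simp only [mul_smul, he, Prod.smul_mk, he_m, smul_zero]
  · calc ψ e = F (e • (m, n)) := by rw [map_smulₛₗ, F_mn, smul_eq_mul, mul_one]
      _ = ε := by rw [he, F_apply, hm, map_zero, ZeroMemClass.coe_zero, add_zero]

theorem liftsIdempotents_iff_hasLifting [Module.Finite R S] [Module.Projective R S]
    (h𝔞 : 𝔞 ≤ Ring.jacobson R) (hψ : IsReduction 𝔞 ψ.toSemilinearMap) :
    LiftsIdempotents ψ ↔ ∀ I : Ideal T, IsComplemented I → HasLifting.{max s x} 𝔞 ψ I := by
  refine ⟨fun h I hI ↦ ?_, fun h ε hε ↦ ?_⟩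
  · obtain ⟨ε, hε, rfl⟩ := exists_isIdempotentElem_range_toSpanSingleton_eq hI
    obtain ⟨e, he, rfl⟩ := h ε hε
    exact HasLifting.ulift.{x, s} <| hψ.hasLifting_range
      (LinearMap.toSpanSingleton_isIdempotentElem_iff.2 he) fun s ↦ map_mul ψ s e
  · have compl := LinearMap.IsIdempotentElem.isCompl
      (LinearMap.toSpanSingleton_isIdempotentElem_iff.2 hε)
    exact exists_isIdempotentElem_map_eq_of_hasLifting h𝔞 hψ compl (h _ ⟨_, compl⟩)
      (h _ ⟨_, compl.symm⟩) ⟨1, one_mul ε⟩ (by simp [sub_mul, hε.eq])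

theorem isSemiperfectRing_iff_principal_indecomposables_lift_general
    [Module.Finite R S] [Module.Projective R S] [IsArtinianRing T] (h𝔞 : 𝔞 ≤ Ring.jacobson R)
    (hψ : IsReduction 𝔞 ψ.toSemilinearMap) :
    IsSemiperfectRing S ↔ ∀ I : Ideal T, (∃ J : Ideal T, IsCompl I J) → Nontrivial I →
      (∀ N N' : Submodule T I, IsCompl N N' → N = ⊥ ∨ N' = ⊥) → HasLifting.{max s x} 𝔞 ψ I := by
  rw [isSemiperfectRing_iff_liftsIdempotents hψ.surjective (hψ.ker_le_jacobson h𝔞),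
    liftsIdempotents_iff_hasLifting.{x} h𝔞 hψ]
  refine ⟨fun h I hI _ _ ↦ h I hI, fun h I hI ↦ ?_⟩
  refine isComplemented_induction (p := fun I : Ideal T ↦ HasLifting.{max s x} 𝔞 ψ I)
    .of_subsingleton (fun _ _ ↦ HasLifting.sup) (fun I hI hI_bot hI_indec ↦ ?_) hI
  refine h I hI (Submodule.nontrivial_iff_ne_bot.2 hI_bot) fun N N' hNN' ↦ ?_
  exact (hI_indec _ _ (I.mapIic.isCompl hNN')).imp (map_eq_bot_iff I.mapIic).1
    (map_eq_bot_iff I.mapIic).1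

end Reduction

section Order

variable {𝒪 : Type*} [CommRing 𝒪] [IsDomain 𝒪] [IsDiscreteValuationRing 𝒪]
  {Λ : Type*} [Ring Λ] [Algebra 𝒪 Λ]

theorem isReduction_resMap :
    IsReduction (IsLocalRing.maximalIdeal 𝒪) (resMap 𝒪 Λ).toSemilinearMap where
  surjective :=
    TensorProduct.mk_surjective 𝒪 Λ (IsLocalRing.ResidueField 𝒪) Ideal.Quotient.mk_surjective
  map_eq_zero_iff a :=
    SetLike.ext_iff.1
      (LinearMap.ker_tensorProductMk (R := 𝒪) (Q := Λ) (I := IsLocalRing.maximalIdeal 𝒪)) a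

theorem nonempty_lifting_iff_hasLifting {P : Type w} [AddCommGroup P]
    [Module (resAlgebra 𝒪 Λ) P] : Nonempty (Lifting 𝒪 Λ P) ↔
      HasLifting.{w} (IsLocalRing.maximalIdeal 𝒪) (resMap 𝒪 Λ) P := by
  constructor
  · rintro ⟨@⟨M, _, _, _, _, hM, f, hf_surj, hf_ker⟩⟩
    exact ⟨M, _, _, _, inferInstance, f, hM, hf_surj, hf_ker⟩
  · rintro ⟨_, _, _, _, _, f, hM, hf⟩
    exact ⟨⟨_, hM, f, hf.surjective, hf.map_eq_zero_iff⟩⟩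

end Order

/-- **Proposition.** The `𝕆`-order `A` is semiperfect if and only if every principal
indecomposable `A_𝔽`-module (a nonzero indecomposable direct summand of the regular module
`A_𝔽`, i.e. a left ideal `I` admitting a complement and having no nontrivial direct sum
decomposition) admits a lifting. -/
theorem isSemiperfectRing_iff_principal_indecomposables_lift :
    IsSemiperfectRing A ↔
      ∀ I : Ideal (resAlgebra 𝕆 A),
        (∃ J : Ideal (resAlgebra 𝕆 A), IsCompl I J) →
        Nontrivial I →
        (∀ N N' : Submodule (resAlgebra 𝕆 A) I, IsCompl N N' → N = ⊥ ∨ N' = ⊥) →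
        Nonempty (Lifting 𝕆 A I) := by
  have : IsArtinianRing (resAlgebra 𝕆 A) := .of_finite (IsLocalRing.ResidueField 𝕆) _
  have maximalIdeal_le : IsLocalRing.maximalIdeal 𝕆 ≤ Ring.jacobson 𝕆 := by
    rw [← Ideal.jacobson_bot, IsLocalRing.jacobson_eq_maximalIdeal _ bot_ne_top]
  simp only [nonempty_lifting_iff_hasLifting]
  exact isSemiperfectRing_iff_principal_indecomposables_lift_general.{u} maximalIdeal_le
    isReduction_resMap
end

section
/- Let 𝕆 be a discrete valuation ring with residue field 𝔽 and fraction field 𝕂, and let A be an 𝕆-order. If the 𝔽-algebra A_𝔽 = 𝔽 ⊗_𝕆 A is semisimple, then the 𝕂-algebra A_𝕂 = 𝕂 ⊗_𝕆 A is semisimple. -/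
open TensorProduct

universe u v w

variable (𝕆 : Type u) [CommRing 𝕆] [IsDomain 𝕆] [IsDiscreteValuationRing 𝕆]
variable (A : Type v) [Ring A] [Algebra 𝕆 A] [Module.Finite 𝕆 A] [Module.Projective 𝕆 A]

/-!
The image `B` of `A` in `E = 𝕂 ⊗ A` is a lattice, hence free over `𝕆`. If the Jacobson radical of
`E` were nonzero, it would meet `B` in some `x ≠ 0`. Dividing `x` by a coordinate which divides all
the others yields an element `y` of the radical which lies in `B` and has nonzero reduction. The
radical of the Artinian ring `E` is nilpotent, so every `b * y` with `b ∈ B` is nilpotent. Hence the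
reduction of `y` lies in the radical of `𝔽 ⊗ B`, which vanishes because `𝔽 ⊗ B` is a quotient of
the semisimple ring `𝔽 ⊗ A`.
-/

section JacobsonRadical

variable {R : Type*} [Ring R]

theorem mem_jacobson_of_forall_isNilpotent_mul {x : R} (hx : ∀ y, IsNilpotent (y * x)) :
    x ∈ Ring.jacobson R := by
  rw [← Ideal.jacobson_bot, Ideal.mem_jacobson_iff]
  intro y
  obtain ⟨u, hu⟩ := (hx y).isUnit_add_one
  refine ⟨↑u⁻¹, ?_⟩
  rw [Ideal.mem_bot, mul_assoc, ← mul_add_one, ← hu, Units.inv_mul, sub_self]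

theorem isNilpotent_of_mem_jacobson [IsSemiprimaryRing R] {x : R} (hx : x ∈ Ring.jacobson R) :
    IsNilpotent x := by
  obtain ⟨n, hn⟩ := IsSemiprimaryRing.isNilpotent (R := R)
  exact ⟨n, by simpa [hn] using Ideal.pow_mem_pow hx n⟩

theorem map_eq_zero_of_forall_isNilpotent_mul {S : Type*} [Ring S] [IsSemisimpleRing S]
    {f : R →+* S} (hf : Function.Surjective f) {x : R} (hx : ∀ y, IsNilpotent (y * x)) :
    f x = 0 := by
  rw [← Ideal.mem_bot, ← IsSemisimpleRing.jacobson_eq_bot]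
  refine mem_jacobson_of_forall_isNilpotent_mul fun z ↦ ?_
  obtain ⟨y, rfl⟩ := hf z
  exact map_mul f y x ▸ (hx y).map f

end JacobsonRadical

section ValuationRing

theorem exists_forall_dvd_of_preValuationRing {R ι : Type*} [Monoid R] [PreValuationRing R]
    [Finite ι] [Nonempty ι] (a : ι → R) : ∃ j, ∀ i, a j ∣ a i :=
  have directed : Directed (fun r s ↦ s ∣ r) a := fun i k ↦
    (ValuationRing.dvd_total (a i) (a k)).elim (fun h ↦ ⟨i, dvd_rfl, h⟩) fun h ↦ ⟨k, h, dvd_rfl⟩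
  have : IsTrans R (fun r s ↦ s ∣ r) := ⟨fun _ _ _ h h' ↦ h'.trans h⟩
  directed.finite_le id

variable {R : Type*} [CommRing R] [IsDomain R] [ValuationRing R]
variable {M : Type*} [AddCommGroup M] [Module R M] [Module.Finite R M]

theorem free_of_isTorsionFree_of_valuationRing [Module.IsTorsionFree R M] : Module.Free R M :=
  have : Module.Flat R M := Module.Flat.flat_iff_torsion_eq_bot_of_isBezout.mpr
    ((Submodule.isTorsionFree_iff_torsion_eq_bot).mp inferInstance)
  Module.free_of_flat_of_isLocalRing

theorem exists_smul_eq_and_one_tmul_ne_zero [Module.IsTorsionFree R M] {x : M} (hx : x ≠ 0) :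
    ∃ (r : R) (y : M), r • y = x ∧ (1 : IsLocalRing.ResidueField R) ⊗ₜ[R] y ≠ 0 := by
  have : Module.Free R M := free_of_isTorsionFree_of_valuationRing
  let b := Module.Free.chooseBasis R M
  obtain ⟨i₀, hi₀⟩ : ∃ i, b.repr x i ≠ 0 := by
    by_contra! h
    exact hx (b.ext_elem fun i ↦ by simpa using h i)
  have : Nonempty (Module.Free.ChooseBasisIndex R M) := ⟨i₀⟩
  obtain ⟨j, hj⟩ := exists_forall_dvd_of_preValuationRing (b.repr x)
  have hj₀ : b.repr x j ≠ 0 := fun h ↦ hi₀ (zero_dvd_iff.mp (h ▸ hj i₀))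
  choose c hc using hj
  have hcj : c j = 1 := mul_left_cancel₀ hj₀ ((hc j).symm.trans (mul_one _).symm)
  refine ⟨b.repr x j, ∑ i, c i • b i, ?_, fun h ↦ ?_⟩
  · simp only [Finset.smul_sum, smul_smul, ← hc, b.sum_repr]
  · have hcoord := congrArg (fun z ↦ (b.baseChange (IsLocalRing.ResidueField R)).repr z j) h
    simp only [Module.Basis.baseChange_repr_tmul, b.repr_sum_self, hcj, one_smul, map_zero,
      Finsupp.coe_zero, Pi.zero_apply, one_ne_zero] at hcoord

end ValuationRing

section Lattice

variable {R : Type*} [CommRing R] (K : Type*) [CommRing K] [Algebra R K]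

theorem finite_of_isLattice {V : Type*} [AddCommGroup V] [Module R V] [Module K V]
    [IsScalarTower R K V] (L : Submodule R V) [Submodule.IsLattice K L] : Module.Finite K V := by
  obtain ⟨s, hs⟩ := Submodule.IsLattice.fg (A := K) (M := L)
  refine ⟨s, ?_⟩
  rw [← Submodule.span_span_of_tower R, hs, Submodule.IsLattice.span_eq_top]

theorem eq_bot_of_disjoint_of_span_eq_top (S : Submonoid R) [IsLocalization S K] {V : Type*}
    [AddCommGroup V] [Module R V] [Module K V] [IsScalarTower R K V] {L : Submodule R V}
    (hL : Submodule.span K (L : Set V) = ⊤) {W : Submodule K V}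
    (hW : Disjoint (W.restrictScalars R) L) : W = ⊥ := by
  refine (Submodule.eq_bot_iff W).mpr fun x hx ↦ ?_
  obtain ⟨s, hs⟩ : ∃ s : S, s • x ∈ L := by
    simpa using multiple_mem_span_of_mem_localization_span S K (L : Set V) x
      (hL ▸ Submodule.mem_top)
  have hsx : (s : R) • x = 0 :=
    Submodule.disjoint_def.mp hW _ (Submodule.smul_of_tower_mem W (s : R) hx) hs
  rwa [← algebraMap_smul K, (IsLocalization.map_units K s).smul_eq_zero] at hsx

theorem isLattice_range_mk_one (M : Type*) [AddCommGroup M] [Module R M] [Module.Finite R M] :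
    Submodule.IsLattice K (LinearMap.range (TensorProduct.mk R K M 1)) where
  fg := Module.Finite.iff_fg.mp (Module.Finite.range _)
  span_eq_top := by
    rw [← Submodule.map_top, ← Submodule.baseChange_eq_span, Submodule.baseChange_top]

end Lattice

section FractionField

variable {R : Type*} [CommRing R] [IsDomain R] [ValuationRing R]
variable (K : Type*) [Field K] [Algebra R K] [IsFractionRing R K]

theorem exists_mem_and_one_tmul_ne_zero_of_isLattice {V : Type*} [AddCommGroup V] [Module R V]
    [Module K V] [IsScalarTower R K V] (L : Submodule R V) [Submodule.IsLattice K L]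
    {W : Submodule K V} (hW : W ≠ ⊥) :
    ∃ y : L, (y : V) ∈ W ∧ (1 : IsLocalRing.ResidueField R) ⊗ₜ[R] y ≠ 0 := by
  have : Module.Finite R L := Submodule.IsLattice.finite K L
  have : Module.IsTorsionFree R V := .trans_faithfulSMul R K V
  have not_disjoint : ¬Disjoint (W.restrictScalars R) L := fun h ↦
    hW (eq_bot_of_disjoint_of_span_eq_top K (nonZeroDivisors R) Submodule.IsLattice.span_eq_top h)
  simp only [Submodule.disjoint_def, not_forall] at not_disjoint
  obtain ⟨x, hxW, hxL, hx⟩ := not_disjoint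
  obtain ⟨r, y, hry, hy⟩ := exists_smul_eq_and_one_tmul_ne_zero (R := R) (x := (⟨x, hxL⟩ : L))
    (fun h ↦ hx (congrArg Subtype.val h))
  have hryx : algebraMap R K r • (y : V) = x := by
    rw [algebraMap_smul, ← L.coe_smul, hry]
  have hr : algebraMap R K r ≠ 0 := fun h ↦ hx (by rw [← hryx, h, zero_smul])
  exact ⟨y, (W.smul_mem_iff hr).mp (hryx ▸ hxW), hy⟩

theorem isSemisimpleRing_of_isLattice_of_isSemisimpleRing_residue {E : Type*} [Ring E]
    [Algebra R E] [Algebra K E] [IsScalarTower R K E] (B : Subalgebra R E)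
    [Submodule.IsLattice K (Subalgebra.toSubmodule B)]
    [IsSemisimpleRing (IsLocalRing.ResidueField R ⊗[R] B)] : IsSemisimpleRing E := by
  have : Module.Finite K E := finite_of_isLattice K (Subalgebra.toSubmodule B)
  have : IsArtinianRing E := IsArtinianRing.of_finite K E
  let J : Submodule K E := (Ring.jacobson E).restrictScalars K
  suffices J = ⊥ by
    rwa [IsArtinianRing.isSemisimpleRing_iff_jacobson, ← Submodule.restrictScalars_eq_bot_iff K]
  by_contra hJ
  obtain ⟨y, hyJ, hy⟩ :=
    exists_mem_and_one_tmul_ne_zero_of_isLattice K (Subalgebra.toSubmodule B) hJ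
  have isNilpotent_mul (b : B) : IsNilpotent (b * y : B) :=
    (IsNilpotent.map_iff (f := B.val) Subtype.val_injective).mp
      (isNilpotent_of_mem_jacobson (Ideal.mul_mem_left _ (b : E) hyJ))
  let reduction : B →ₐ[R] IsLocalRing.ResidueField R ⊗[R] B := Algebra.TensorProduct.includeRight
  have reduction_surjective : Function.Surjective reduction :=
    Algebra.TensorProduct.includeRight_surjective _ IsLocalRing.residue_surjective
  exact hy (map_eq_zero_of_forall_isNilpotent_mul (f := reduction.toRingHom)
    reduction_surjective isNilpotent_mul)

theorem isSemisimpleRing_generic_of_isSemisimpleRing_residue_general (A : Type*) [Ring A]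
    [Algebra R A] [Module.Finite R A]
    (h : IsSemisimpleRing (IsLocalRing.ResidueField R ⊗[R] A)) :
    IsSemisimpleRing (K ⊗[R] A) := by
  let f : A →ₐ[R] K ⊗[R] A := Algebra.TensorProduct.includeRight
  have : Submodule.IsLattice K (Subalgebra.toSubmodule f.range) := isLattice_range_mk_one K A
  have : IsSemisimpleRing (IsLocalRing.ResidueField R ⊗[R] f.range) :=
    RingHom.isSemisimpleRing_of_surjective
      (Algebra.TensorProduct.map (AlgHom.id R (IsLocalRing.ResidueField R))
        f.rangeRestrict).toRingHom
      (TensorProduct.map_surjective Function.surjective_id f.rangeRestrict_surjective)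
  exact isSemisimpleRing_of_isLattice_of_isSemisimpleRing_residue K f.range

end FractionField

/-- **Lemma.** If `A_𝔽 = 𝔽 ⊗_𝕆 A` is semisimple, then `A_𝕂 = 𝕂 ⊗_𝕆 A` is semisimple,
where `𝕂` is the fraction field of `𝕆`. -/
theorem isSemisimpleRing_generic_of_isSemisimpleRing_residue
    (h : IsSemisimpleRing (resAlgebra 𝕆 A)) :
    IsSemisimpleRing ((FractionRing 𝕆) ⊗[𝕆] A) :=
  isSemisimpleRing_generic_of_isSemisimpleRing_residue_general (FractionRing 𝕆) A h
end
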